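/- arXiv:1712.03345 — 3 statements merged into one kernel-verified Lean document; each statement's English description precedes it below -/
import Mathlib

section
/- Let S be the homomorphism of the Fibonacci language L_F with S(0) = 1 and S(1) = 3. Then S(L_F) = ℕ, the set of all positive integers. -/
/-- `w` is a nonempty finite factor of the infinite word `f`. -/
def IsFactor {A : Type*} (f : ℕ → A) (w : List A) : Prop :=
  w ≠ [] ∧ ∃ i : ℕ, w = (List.range w.length).map fun j => f (i + j)

/-- The golden mean `Φ = (1+√5)/2`. -/
noncomputable def Phi : ℝ := (1 + Real.sqrt 5) / 2

/-- The Fibonacci word `c(n) = ⌊(n+2)α⌋ − ⌊(n+1)α⌋` with `α = 2 − Φ`. -/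
noncomputable def fibWord (n : ℕ) : ℤ :=
  ⌊((n : ℝ) + 2) * (2 - Phi)⌋ - ⌊((n : ℝ) + 1) * (2 - Phi)⌋

/-- The infinite word `0c`: the Fibonacci word prefixed by `0`. -/
noncomputable def fibWord0 (n : ℕ) : ℤ :=
  if n = 0 then 0 else fibWord (n - 1)

/-- The infinite word `1c`: the Fibonacci word prefixed by `1`. -/
noncomputable def fibWord1 (n : ℕ) : ℤ :=
  if n = 0 then 1 else fibWord (n - 1)

/-- The Fibonacci language: nonempty finite factors of `0c` or of `1c`. -/
def fibLang : Set (List ℤ) :=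
  {w | IsFactor fibWord0 w ∨ IsFactor fibWord1 w}

/-- The homomorphism determined by `S0 = S(0)`, `S1 = S(1)`:
`S(w) = N_0(w)·S0 + N_1(w)·S1`. -/
def wordVal01 (S0 S1 : ℕ) (w : List ℤ) : ℕ :=
  w.count 0 * S0 + w.count 1 * S1

/-- The floors `⌊n α⌋`. -/
noncomputable def fibFl (n : ℕ) : ℤ := ⌊(n : ℝ) * (2 - Phi)⌋

lemma alpha_bounds : 0 < 2 - Phi ∧ 2 * (2 - Phi) < 1 := by
  unfold Phi
  have h1 : Real.sqrt 5 < 3 := by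
    rw [Real.sqrt_lt' (by norm_num)]; norm_num
  have h2 : 2 < Real.sqrt 5 := by
    rw [Real.lt_sqrt (by norm_num)]; norm_num
  constructor <;> linarith

lemma fibFl_one : fibFl 1 = 0 := by
  obtain ⟨h1, h2⟩ := alpha_bounds
  unfold fibFl
  rw [Int.floor_eq_zero_iff]
  constructor <;> push_cast <;> linarith

lemma fibFl_two : fibFl 2 = 0 := by
  obtain ⟨h1, h2⟩ := alpha_bounds
  unfold fibFl
  rw [Int.floor_eq_zero_iff]
  constructor <;> push_cast <;> linarith

lemma fibFl_mono (n : ℕ) : fibFl n ≤ fibFl (n + 1) := by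
  obtain ⟨h1, h2⟩ := alpha_bounds
  unfold fibFl
  apply Int.floor_le_floor
  push_cast
  linarith

lemma fibFl_two_step (n : ℕ) : fibFl (n + 2) ≤ fibFl n + 1 := by
  obtain ⟨h1, h2⟩ := alpha_bounds
  unfold fibFl
  rw [← Int.floor_add_one]
  apply Int.floor_le_floor
  push_cast
  linarith

lemma fibWord_eq (n : ℕ) : fibWord n = fibFl (n + 2) - fibFl (n + 1) := by
  simp [fibWord, fibFl]

lemma fibWord_cases (n : ℕ) : fibWord n = 0 ∨ fibWord n = 1 := by
  have h1 := fibFl_mono n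
  have h2 := fibFl_mono (n + 1)
  have h3 := fibFl_two_step n
  rw [fibWord_eq]
  have : n + 1 + 1 = n + 2 := rfl
  rw [this] at h2
  omega

lemma count_add (f : ℕ → ℤ) (hf : ∀ n, f n = 0 ∨ f n = 1) (l : List ℕ) :
    (l.map f).count 0 + (l.map f).count 1 = l.length := by
  induction l with
  | nil => simp
  | cons a l ih =>
    rcases hf a with h | h <;> simp [h] <;> omega

lemma count_one (f : ℕ → ℤ) (hf : ∀ n, f (n + 1) = fibWord n) (h0 : f 0 = 0 ∨ f 0 = 1) (n : ℕ) :
    (((List.range (n + 1)).map f).count 1 : ℤ) = f 0 + fibFl (n + 1) := by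
  induction n with
  | zero =>
    rcases h0 with h | h <;> simp [h, fibFl_one]
  | succ n ih =>
    rw [List.range_succ, List.map_append, List.count_append]
    push_cast
    rw [ih]
    have e := fibWord_eq n
    have h := hf n
    rcases fibWord_cases n with h1 | h1 <;> rw [h1] at h e <;> simp [h] <;>
      (try rw [show n + 1 + 1 = n + 2 from rfl]) <;> omega

lemma fibWord0_succ (n : ℕ) : fibWord0 (n + 1) = fibWord n := by simp [fibWord0]
lemma fibWord1_succ (n : ℕ) : fibWord1 (n + 1) = fibWord n := by simp [fibWord1]

lemma fibWord0_cases (n : ℕ) : fibWord0 n = 0 ∨ fibWord0 n = 1 := by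
  cases n with
  | zero => simp [fibWord0]
  | succ n => rw [fibWord0_succ]; exact fibWord_cases n

lemma fibWord1_cases (n : ℕ) : fibWord1 n = 0 ∨ fibWord1 n = 1 := by
  cases n with
  | zero => simp [fibWord1]
  | succ n => rw [fibWord1_succ]; exact fibWord_cases n

lemma key (m : ℕ) : ∃ n : ℕ, ((m : ℤ) + 1 = n + 1 + 2 * fibFl (n + 1)) ∨
    ((m : ℤ) + 1 = n + 1 + 2 * fibFl (n + 1) + 2) := by
  induction m with
  | zero => exact ⟨0, Or.inl (by simp [fibFl_one])⟩
  | succ m ih =>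
    obtain ⟨n, h⟩ := ih
    have h1 := fibFl_mono (n + 1)
    have h2 := fibFl_two_step n
    have h3 := fibFl_mono n
    rw [show n + 1 + 1 = n + 2 from rfl] at h1
    by_cases hi : fibFl (n + 2) = fibFl (n + 1)
    · refine ⟨n + 1, ?_⟩
      rw [show n + 1 + 1 = n + 2 from rfl]
      push_cast
      omega
    · rcases h with h | h
      · cases n with
        | zero => simp [fibFl_one, fibFl_two] at hi
        | succ k =>
          refine ⟨k, Or.inr ?_⟩
          rw [show k + 1 + 2 = k + 3 from rfl] at *
          rw [show k + 1 + 1 = k + 2 from rfl] at *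
          push_cast at *
          omega
      · refine ⟨n + 1, Or.inl ?_⟩
        rw [show n + 1 + 1 = n + 2 from rfl]
        push_cast
        omega

theorem fib_image_is_N_one_three :
    {m : ℕ | ∃ w ∈ fibLang, wordVal01 1 3 w = m} = {n : ℕ | 0 < n} := by
  ext m
  simp only [Set.mem_setOf_eq]
  constructor
  · rintro ⟨w, hw, rfl⟩
    have aux : ∀ f : ℕ → ℤ, (∀ n, f n = 0 ∨ f n = 1) → IsFactor f w → 0 < wordVal01 1 3 w := by
      rintro f hf ⟨hne, i, hi⟩
      have hc := count_add (fun j => f (i + j)) (fun j => hf _) (List.range w.length)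
      rw [← hi, List.length_range] at hc
      have := List.length_pos_iff.mpr hne
      unfold wordVal01
      omega
    rcases hw with hw | hw
    · exact aux _ fibWord0_cases hw
    · exact aux _ fibWord1_cases hw
  · intro hm
    obtain ⟨k, rfl⟩ : ∃ k, m = k + 1 := ⟨m - 1, by omega⟩
    obtain ⟨n, h | h⟩ := key k
    · refine ⟨(List.range (n + 1)).map fibWord0, Or.inl ⟨by simp, 0, by simp⟩, ?_⟩
      have h1 := count_add fibWord0 fibWord0_cases (List.range (n + 1))
      have h2 := count_one fibWord0 fibWord0_succ (fibWord0_cases 0) n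
      rw [show fibWord0 0 = 0 by simp [fibWord0]] at h2
      rw [List.length_range] at h1
      unfold wordVal01
      omega
    · refine ⟨(List.range (n + 1)).map fibWord1, Or.inr ⟨by simp, 0, by simp⟩, ?_⟩
      have h1 := count_add fibWord1 fibWord1_cases (List.range (n + 1))
      have h2 := count_one fibWord1 fibWord1_succ (fibWord1_cases 0) n
      rw [show fibWord1 0 = 1 by simp [fibWord1]] at h2
      rw [List.length_range] at h1
      unfold wordVal01
      omega
end

section
/- Let S be the homomorphism of the Fibonacci language L_F with S(0) = 3 and S(1) = 2, and let Φ = (1+√5)/2. Then the complement of S(L_F) in the positive integers is ℕ \ S(L_F) = {2⌊nΦ⌋ + n + 1 : n ≥ 0} = {1, 4, 9, 12, ...}. -/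
theorem aux_val (f : ℕ → ℤ) (F : ℕ → ℤ) (hF : ∀ j, f j = F (j+1) - F j)
    (h01 : ∀ j, f j = 0 ∨ f j = 1) (i L : ℕ) :
    (wordVal01 3 2 ((List.range L).map fun j => f (i + j)) : ℤ) = 3 * L - (F (i + L) - F i) := by
  induction L with
  | zero => simp [wordVal01]
  | succ L ih =>
    have h1 := hF (i + L)
    unfold wordVal01 at *
    rw [List.range_succ, List.map_append, List.count_append, List.count_append]
    rcases h01 (i + L) with h | h
    · simp [h, ← add_assoc] at *
      linarith
    · simp [h, ← add_assoc] at *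
      linarith

theorem Phi_sq : Phi * Phi = Phi + 1 := by
  unfold Phi
  have := Real.mul_self_sqrt (show (0:ℝ) ≤ 5 by norm_num)
  nlinarith

theorem Phi_gt : 1.5 < Phi := by
  unfold Phi
  have : (2:ℝ) < Real.sqrt 5 := by
    rw [Real.lt_sqrt] <;> norm_num
  linarith

theorem Phi_lt : Phi < 2 := by
  unfold Phi
  have : Real.sqrt 5 < (3:ℝ) := by
    rw [Real.sqrt_lt'] <;> norm_num
  linarith

theorem Phi_irr : Irrational Phi := Real.goldenRatio_irrational

theorem Phi_ne (n : ℕ) (hn : 0 < n) (a : ℤ) : (n : ℝ) * Phi ≠ a := by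
  have := Phi_irr.natCast_mul hn.ne'
  exact this.ne_int a

theorem f0_eq (j : ℕ) : fibWord0 j =
    ⌊((j + 1 : ℕ) : ℝ) * (2 - Phi)⌋ - ⌊(j : ℝ) * (2 - Phi)⌋ := by
  have h1 := Phi_gt
  have h2 := Phi_lt
  unfold fibWord0
  rcases j with _ | j
  · simp
    symm
    rw [Int.floor_eq_iff]
    norm_num
    constructor <;> linarith
  · simp [fibWord]
    ring_nf

theorem ceil_eq (j : ℕ) : ⌈((j + 1 : ℕ) : ℝ) * (2 - Phi)⌉ = ⌊((j + 1 : ℕ) : ℝ) * (2 - Phi)⌋ + 1 := by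
  have h := Phi_ne (j+1) (by omega) (2 * (j + 1) - ⌊((j + 1 : ℕ) : ℝ) * (2 - Phi)⌋)
  have h3 := Int.floor_le (((j + 1 : ℕ) : ℝ) * (2 - Phi))
  have h4 := Int.lt_floor_add_one (((j + 1 : ℕ) : ℝ) * (2 - Phi))
  rw [Int.ceil_eq_iff]
  push_cast at *
  refine ⟨?_, h4.le⟩
  rw [add_sub_cancel_right]
  refine lt_of_le_of_ne h3 fun hh => h ?_
  rw [hh]; ring

theorem f1_eq (j : ℕ) : fibWord1 j =
    ⌈((j + 1 : ℕ) : ℝ) * (2 - Phi)⌉ - ⌈(j : ℝ) * (2 - Phi)⌉ := by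
  have h0 := f0_eq j
  rw [ceil_eq]
  rcases j with _ | j
  · simp only [fibWord0, fibWord1, if_true, Nat.cast_zero, zero_mul, Int.floor_zero,
      Int.ceil_zero] at *
    omega
  · rw [ceil_eq]
    simp only [fibWord0, fibWord1, Nat.add_eq_zero_iff, one_ne_zero, and_false, if_false] at *
    omega

theorem f0_01 (j : ℕ) : fibWord0 j = 0 ∨ fibWord0 j = 1 := by
  have h1 := Phi_gt
  have h2 := Phi_lt
  have h := f0_eq j
  have a1 := Int.floor_le (((j + 1 : ℕ) : ℝ) * (2 - Phi))
  have a2 := Int.lt_floor_add_one (((j + 1 : ℕ) : ℝ) * (2 - Phi))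
  have a3 := Int.floor_le ((j : ℝ) * (2 - Phi))
  have a4 := Int.lt_floor_add_one ((j : ℝ) * (2 - Phi))
  have e : ((fibWord0 j : ℤ) : ℝ) = (⌊((j + 1 : ℕ) : ℝ) * (2 - Phi)⌋ : ℝ) - ⌊(j : ℝ) * (2 - Phi)⌋ := by
    rw [h]; push_cast; rfl
  push_cast at *
  have b1 : ((-1 : ℤ) : ℝ) < fibWord0 j := by push_cast; linarith
  have b2 : (fibWord0 j : ℝ) < (2 : ℤ) := by push_cast; linarith
  have b1' := Int.cast_lt.1 b1
  have b2' := Int.cast_lt.1 b2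
  omega

theorem f1_01 (j : ℕ) : fibWord1 j = 0 ∨ fibWord1 j = 1 := by
  have := f0_01 j
  unfold fibWord0 at this
  unfold fibWord1
  split_ifs at * <;> simp_all

theorem mem_iff (n : ℕ) : (∃ w ∈ fibLang, wordVal01 3 2 w = n) ↔
    ∃ L : ℕ, 0 < L ∧ ((n : ℤ) = L + ⌊(L : ℝ) * Phi⌋ ∨ (n : ℤ) = L + ⌊(L : ℝ) * Phi⌋ + 1) := by
  constructor
  · rintro ⟨w, hw, rfl⟩
    suffices H : ∃ L : ℕ, 0 < L ∧ (L + L * Phi - 1 < wordVal01 3 2 w) ∧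
        ((wordVal01 3 2 w : ℝ) < L + L * Phi + 1) by
      obtain ⟨L, hL, h1, h2⟩ := H
      refine ⟨L, hL, ?_⟩
      have a1 := Int.floor_le ((L : ℝ) * Phi)
      have a2 := Int.lt_floor_add_one ((L : ℝ) * Phi)
      have b1 : (((L : ℤ) + ⌊(L : ℝ) * Phi⌋ - 1 : ℤ) : ℝ) < ((wordVal01 3 2 w : ℤ) : ℝ) := by
        push_cast; linarith
      have b2 : ((wordVal01 3 2 w : ℤ) : ℝ) < (((L : ℤ) + ⌊(L : ℝ) * Phi⌋ + 2 : ℤ) : ℝ) := by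
        push_cast; linarith
      have b1' := Int.cast_lt.1 b1
      have b2' := Int.cast_lt.1 b2
      omega
    rcases hw with ⟨hne, i, hi⟩ | ⟨hne, i, hi⟩
    · refine ⟨w.length, List.length_pos_iff.2 hne, ?_⟩
      have hv := aux_val fibWord0 (fun n => ⌊(n : ℝ) * (2 - Phi)⌋) f0_eq f0_01 i w.length
      rw [← hi] at hv
      have hv' := congrArg (Int.cast : ℤ → ℝ) hv
      have a1 := Int.floor_le ((i : ℝ) * (2 - Phi))
      have a2 := Int.lt_floor_add_one ((i : ℝ) * (2 - Phi))
      have a3 := Int.floor_le (((i + w.length : ℕ) : ℝ) * (2 - Phi))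
      have a4 := Int.lt_floor_add_one (((i + w.length : ℕ) : ℝ) * (2 - Phi))
      push_cast at *
      constructor <;> linarith
    · refine ⟨w.length, List.length_pos_iff.2 hne, ?_⟩
      have hv := aux_val fibWord1 (fun n => ⌈(n : ℝ) * (2 - Phi)⌉) f1_eq f1_01 i w.length
      rw [← hi] at hv
      have hv' := congrArg (Int.cast : ℤ → ℝ) hv
      have a1 := Int.le_ceil ((i : ℝ) * (2 - Phi))
      have a2 := Int.ceil_lt_add_one ((i : ℝ) * (2 - Phi))
      have a3 := Int.le_ceil (((i + w.length : ℕ) : ℝ) * (2 - Phi))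
      have a4 := Int.ceil_lt_add_one (((i + w.length : ℕ) : ℝ) * (2 - Phi))
      push_cast at *
      constructor <;> linarith
  · rintro ⟨L, hL, h⟩
    have hc : ⌈(L : ℝ) * (2 - Phi)⌉ = 2 * L - ⌊(L : ℝ) * Phi⌋ := by
      have a1 := Int.floor_le ((L : ℝ) * Phi)
      have a2 := Int.lt_floor_add_one ((L : ℝ) * Phi)
      rw [Int.ceil_eq_iff]
      push_cast
      constructor <;> linarith
    rcases h with h | h
    · refine ⟨(List.range L).map fun j => fibWord1 (0 + j), Or.inr ⟨?_, 0, ?_⟩, ?_⟩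
      · simp; omega
      · simp
      · have hv := aux_val fibWord1 (fun n => ⌈(n : ℝ) * (2 - Phi)⌉) f1_eq f1_01 0 L
        simp only [zero_add, hc, Nat.cast_zero, zero_mul, Int.ceil_zero] at hv ⊢
        omega
    · refine ⟨(List.range L).map fun j => fibWord0 (0 + j), Or.inl ⟨?_, 0, ?_⟩, ?_⟩
      · simp; omega
      · simp
      · have hv := aux_val fibWord0 (fun n => ⌊(n : ℝ) * (2 - Phi)⌋) f0_eq f0_01 0 L
        obtain ⟨L, rfl⟩ : ∃ M, L = M + 1 := ⟨L - 1, by omega⟩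
        have := ceil_eq L
        simp only [zero_add, Nat.cast_zero, zero_mul, Int.floor_zero] at hv ⊢
        omega

theorem exists_beatty_between (n : ℕ) (hn : 2 ≤ n) : ∃ L : ℕ, 0 < L ∧
    (L : ℤ) + ⌊(L : ℝ) * Phi⌋ ≤ n ∧ (n : ℤ) < (L + 1 : ℕ) + ⌊((L + 1 : ℕ) : ℝ) * Phi⌋ := by
  have h1 := Phi_gt
  have h2 := Phi_lt
  let P : ℕ → Prop := fun L => (n : ℤ) < (L + 1 : ℕ) + ⌊((L + 1 : ℕ) : ℝ) * Phi⌋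
  have hP : ∃ L, P L := by
    refine ⟨n, ?_⟩
    have : 0 ≤ ⌊((n + 1 : ℕ) : ℝ) * Phi⌋ := Int.floor_nonneg.2 (by positivity)
    simp only [P]
    omega
  classical
  have hs := Nat.find_spec hP
  have hmin := fun m => Nat.find_min hP (m := m)
  have h0 : Nat.find hP ≠ 0 := by
    intro h
    rw [h] at hs
    have : ⌊((0 + 1 : ℕ) : ℝ) * Phi⌋ = 1 := by
      rw [Int.floor_eq_iff]; norm_num; constructor <;> linarith
    simp only [P, this] at hs
    omega
  obtain ⟨M, hM⟩ := Nat.exists_eq_succ_of_ne_zero h0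
  have := hmin M (by omega)
  rw [hM] at hs
  exact ⟨M + 1, by omega, not_lt.1 this, hs⟩

theorem fib_complement_three_two :
    {n : ℕ | 0 < n ∧ n ∉ {m : ℕ | ∃ w ∈ fibLang, wordVal01 3 2 w = m}} =
      {n : ℕ | ∃ k : ℕ, (n : ℤ) = 2 * ⌊(k : ℝ) * Phi⌋ + k + 1} := by
  have p1 := Phi_gt
  have p2 := Phi_lt
  have p3 := Phi_sq
  ext n
  simp only [Set.mem_ofPred_eq, mem_iff]
  constructor
  · rintro ⟨hn, hno⟩
    by_cases hn1 : n = 1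
    · exact ⟨0, by simp [hn1]⟩
    obtain ⟨L, hL, hl, hu⟩ := exists_beatty_between n (by omega)
    have hne1 : (n : ℤ) ≠ L + ⌊(L : ℝ) * Phi⌋ := fun h => hno ⟨L, hL, Or.inl h⟩
    have hne2 : (n : ℤ) ≠ L + ⌊(L : ℝ) * Phi⌋ + 1 := fun h => hno ⟨L, hL, Or.inr h⟩
    have a1 := Int.floor_le ((L : ℝ) * Phi)
    have a2 := Int.lt_floor_add_one ((L : ℝ) * Phi)
    have a3 := Int.floor_le (((L + 1 : ℕ) : ℝ) * Phi)
    have a4 := Phi_ne (L + 1) (by omega) ⌊((L + 1 : ℕ) : ℝ) * Phi⌋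
    have a5 := lt_of_le_of_ne a3 (Ne.symm a4)
    generalize ⌊((L + 1 : ℕ) : ℝ) * Phi⌋ = b at *
    generalize ⌊(L : ℝ) * Phi⌋ = a at *
    push_cast at *
    have hb : b < a + 3 := by
      have : (b : ℝ) < ((a + 3 : ℤ) : ℝ) := by push_cast; linarith
      exact Int.cast_lt.1 this
    have hb2 : b = a + 2 := by omega
    have hLa : (L : ℤ) < a + 1 := by
      have : ((L : ℤ) : ℝ) < ((a + 1 : ℤ) : ℝ) := by
        push_cast
        have : (0 : ℝ) ≤ L := by positivity
        nlinarith
      exact Int.cast_lt.1 this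
    obtain ⟨k, hk⟩ := Int.eq_ofNat_of_zero_le (show 0 ≤ a + 1 - L by omega)
    have hkr : (a : ℝ) + 1 - L = k := by exact_mod_cast hk
    have hbr : (b : ℝ) = a + 2 := by exact_mod_cast hb2
    refine ⟨k, ?_⟩
    have : ⌊(k : ℝ) * Phi⌋ = L := by
      rw [Int.floor_eq_iff, ← hkr]
      push_cast
      constructor <;> nlinarith
    rw [this]
    omega
  · rintro ⟨k, hk⟩
    have c1 := Int.floor_le ((k : ℝ) * Phi)
    have c2 := Int.lt_floor_add_one ((k : ℝ) * Phi)
    have c0 : 0 ≤ ⌊(k : ℝ) * Phi⌋ := Int.floor_nonneg.2 (by positivity)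
    refine ⟨by omega, ?_⟩
    rintro ⟨L, hL, h⟩
    have a1 := Int.floor_le ((L : ℝ) * Phi)
    have a2 := Int.lt_floor_add_one ((L : ℝ) * Phi)
    have hLr : (1 : ℝ) ≤ L := by exact_mod_cast hL
    have a0 : 1 ≤ ⌊(L : ℝ) * Phi⌋ := Int.le_floor.2 (by push_cast; nlinarith)
    rcases Nat.eq_zero_or_pos k with rfl | hkp
    · simp at hk
      omega
    have c3 := lt_of_le_of_ne c1 (Ne.symm (Phi_ne k hkp _))
    generalize ⌊(k : ℝ) * Phi⌋ = l at *
    generalize ⌊(L : ℝ) * Phi⌋ = a at *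
    rcases le_or_gt (L : ℤ) l with hc | hc
    · have hcr : (L : ℝ) ≤ l := by exact_mod_cast hc
      have : (a : ℝ) < ((l + k : ℤ) : ℝ) := by
        push_cast
        have e1 : (L : ℝ) * Phi ≤ l * Phi := by gcongr
        have e2 : (l : ℝ) * (Phi - 1) < k * Phi * (Phi - 1) := by
          apply mul_lt_mul_of_pos_right c3; linarith
        have e3 : (k : ℝ) * Phi * (Phi - 1) = k := by linear_combination (k : ℝ) * p3
        linarith
      have := Int.cast_lt.1 this
      omega
    · have hcr : (l : ℝ) + 1 ≤ L := by exact_mod_cast hc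
      have : ((l + k : ℤ) : ℝ) < a := by
        push_cast
        have e1 : ((l : ℝ) + 1) * Phi ≤ L * Phi := by gcongr
        have e2 : (k : ℝ) * Phi * (Phi - 1) < (l + 1) * (Phi - 1) := by
          apply mul_lt_mul_of_pos_right c2; linarith
        have e3 : (k : ℝ) * Phi * (Phi - 1) = k := by linear_combination (k : ℝ) * p3
        linarith
      have := Int.cast_lt.1 this
      omega
end

section
/- Let S be a homomorphism of the Thue–Morse language L_TM with values p = S(a), q = S(b) satisfying gcd(p, q) = 1. Then ℕ \ S(L_TM) has infinite cardinality if and only if p + q ≥ 6; moreover, if p + q < 6 then ℕ \ S(L_TM) has at most one element (it is either empty or a singleton). -/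
/-- The Thue–Morse morphism `a ↦ ab`, `b ↦ ba` (here `a = false`, `b = true`),
extended to words by concatenation. -/
def tmMorph (w : List Bool) : List Bool :=
  w.flatMap fun x => if x then [true, false] else [false, true]

/-- The Thue–Morse word: the fixed point beginning with `a` of the Thue–Morse
morphism (the `n`-th letter is read off from a sufficiently high iterate on `a`). -/
def tmWord (n : ℕ) : Bool :=
  (tmMorph^[n + 1] [false]).getD n false

/-- The Thue–Morse language: nonempty finite factors of the Thue–Morse word. -/
def tmLang : Set (List Bool) :=
  {w | IsFactor tmWord w}

/-- The homomorphism determined by `p = S(a)`, `q = S(b)`: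
`S(w) = N_a(w)·p + N_b(w)·q`. -/
def wordValTM (p q : ℕ) (w : List Bool) : ℕ :=
  w.count false * p + w.count true * q

def tmT : ℕ → Bool
  | 0 => false
  | n + 1 => xor (tmT ((n + 1) / 2)) ((n + 1) % 2 == 1)
decreasing_by omega

lemma tmT_even (n : ℕ) : tmT (2 * n) = tmT n := by
  cases n with
  | zero => rfl
  | succ k =>
    rw [show 2 * (k + 1) = (2 * k + 1) + 1 by ring, tmT]
    rw [show (2 * k + 1 + 1) / 2 = k + 1 by omega, show (2 * k + 1 + 1) % 2 = 0 by omega]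
    simp

lemma tmT_odd (n : ℕ) : tmT (2 * n + 1) = !tmT n := by
  rw [tmT]
  rw [show (2 * n + 1) / 2 = n by omega, show (2 * n + 1) % 2 = 1 by omega]
  simp

lemma tmMorph_range (N : ℕ) :
    tmMorph ((List.range N).map tmT) = (List.range (2 * N)).map tmT := by
  induction N with
  | zero => rfl
  | succ k ih =>
    rw [List.range_succ, show 2 * (k + 1) = (2 * k + 1) + 1 by ring, List.range_succ,
      List.range_succ]
    simp only [List.map_append, List.map_cons, List.map_nil, ← ih, tmT_even, tmT_odd]
    cases h : tmT k <;> simp [tmMorph]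

lemma tmMorph_iter (m : ℕ) : tmMorph^[m] [false] = (List.range (2 ^ m)).map tmT := by
  induction m with
  | zero => simp [tmT]
  | succ k ih => rw [Function.iterate_succ_apply', ih, tmMorph_range, pow_succ, mul_comm]

lemma tmWord_eq (n : ℕ) : tmWord n = tmT n := by
  have h : n < 2 ^ (n + 1) := (Nat.lt_succ_self n).trans (Nat.lt_two_pow_self)
  simp [tmWord, tmMorph_iter, List.getD, h]

def tmC (i : ℕ) : ℕ := i / 2 + if i % 2 = 1 ∧ tmT (i / 2) = true then 1 else 0

lemma tmC_even (m : ℕ) : tmC (2 * m) = m := by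
  simp [tmC]

lemma tmC_odd (m : ℕ) : tmC (2 * m + 1) = m + (tmT m).toNat := by
  unfold tmC
  rw [show (2 * m + 1) / 2 = m by omega, show (2 * m + 1) % 2 = 1 by omega]
  cases tmT m <;> simp

lemma tmC_succ (i : ℕ) : tmC (i + 1) = tmC i + (tmT i).toNat := by
  obtain ⟨m, rfl | rfl⟩ := Nat.even_or_odd' i
  · rw [tmC_odd, tmC_even, tmT_even]
  · rw [show 2 * m + 1 + 1 = 2 * (m + 1) by ring, tmC_odd, tmC_even, tmT_odd]
    cases tmT m <;> simp

def tmFac (i n : ℕ) : List Bool := (List.range n).map fun j => tmWord (i + j)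

lemma tmFac_true (i n : ℕ) : (tmFac i n).count true + tmC i = tmC (i + n) := by
  induction n with
  | zero => simp [tmFac]
  | succ k ih =>
    rw [← add_assoc, tmC_succ, ← ih]
    unfold tmFac
    rw [List.range_succ]
    simp only [List.map_append, List.map_cons, List.map_nil, List.count_append, tmWord_eq]
    cases tmT (i + k) <;> simp <;> omega

lemma tmFac_false (i n : ℕ) : (tmFac i n).count false + (tmFac i n).count true = n := by
  have := List.count_false_add_count_true (tmFac i n)
  rw [this]; simp [tmFac]

lemma tmFac_mem (i n : ℕ) (hn : 0 < n) : tmFac i n ∈ tmLang := by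
  refine ⟨?_, i, ?_⟩
  · simp [tmFac]; omega
  · simp [tmFac]

lemma tmRep (f c i : ℕ) (h : 0 < f + c) (hc : tmC (i + (f + c)) = c + tmC i) (p q : ℕ) :
    ∃ w ∈ tmLang, wordValTM p q w = f * p + c * q := by
  refine ⟨tmFac i (f + c), tmFac_mem _ _ h, ?_⟩
  have h1 := tmFac_true i (f + c)
  have h2 := tmFac_false i (f + c)
  have h3 : (tmFac i (f + c)).count true = c := by omega
  have h4 : (tmFac i (f + c)).count false = f := by omega
  rw [wordValTM, h3, h4]

lemma tmT_pair (k : ℕ) (hk : 0 < k) : ∀ x y : Bool, ∃ m, tmT m = x ∧ tmT (m + k) = y := by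
  induction k using Nat.strong_induction_on with
  | _ k ih =>
    intro x y
    obtain ⟨j, rfl | rfl⟩ := Nat.even_or_odd' k
    · obtain ⟨m, h1, h2⟩ := ih j (by omega) (by omega) x y
      exact ⟨2 * m, by rw [tmT_even, h1], by rw [← mul_add, tmT_even, h2]⟩
    · rcases Nat.eq_zero_or_pos j with rfl | hj
      · cases x <;> cases y
        · exact ⟨5, by simp [tmT], by simp [tmT]⟩
        · exact ⟨0, by simp [tmT], by simp [tmT]⟩
        · exact ⟨2, by simp [tmT], by simp [tmT]⟩
        · exact ⟨1, by simp [tmT], by simp [tmT]⟩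
      · obtain ⟨m, h1, h2⟩ := ih j (by omega) hj x (!y)
        exact ⟨2 * m, by rw [tmT_even, h1],
          by rw [← add_assoc, ← mul_add, tmT_odd, h2]; simp⟩

lemma tmT_hit (k : ℕ) (y : Bool) : ∃ m, tmT (m + k) = y := by
  obtain ⟨m, -, h⟩ := tmT_pair (k + 1) (by omega) true y
  exact ⟨m + 1, by rw [← h]; congr 1; ring⟩

lemma tmRep0 (k p q : ℕ) : ∃ w ∈ tmLang, wordValTM p q w = (k + 1) * p + (k + 1) * q := by
  apply tmRep _ _ 0 (by omega)
  rw [show 0 + (k + 1 + (k + 1)) = 2 * (k + 1) by ring, tmC_even]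
  simp [tmC]

lemma tmRep1 (k p q : ℕ) : ∃ w ∈ tmLang, wordValTM p q w = k * p + (k + 1) * q := by
  obtain ⟨m, hm⟩ := tmT_hit k true
  apply tmRep _ _ (2 * m) (by omega)
  rw [show 2 * m + (k + (k + 1)) = 2 * (m + k) + 1 by ring, tmC_even, tmC_odd, hm]
  simp; omega

lemma tmRep2 (k p q : ℕ) : ∃ w ∈ tmLang, wordValTM p q w = (k + 1) * p + k * q := by
  obtain ⟨m, hm⟩ := tmT_hit k false
  apply tmRep _ _ (2 * m) (by omega)
  rw [show 2 * m + (k + 1 + k) = 2 * (m + k) + 1 by ring, tmC_even, tmC_odd, hm]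
  simp; omega

lemma tmRep3 (k p q : ℕ) : ∃ w ∈ tmLang, wordValTM p q w = k * p + (k + 2) * q := by
  obtain ⟨m, hm, hm'⟩ := tmT_pair (k + 1) (by omega) false true
  apply tmRep _ _ (2 * m + 1) (by omega)
  rw [show 2 * m + 1 + (k + (k + 2)) = 2 * (m + (k + 1)) + 1 by ring, tmC_odd, tmC_odd, hm, hm']
  simp; omega

lemma tmRep4 (k p q : ℕ) : ∃ w ∈ tmLang, wordValTM p q w = (k + 2) * p + k * q := by
  obtain ⟨m, hm, hm'⟩ := tmT_pair (k + 1) (by omega) true false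
  apply tmRep _ _ (2 * m + 1) (by omega)
  rw [show 2 * m + 1 + (k + 2 + k) = 2 * (m + (k + 1)) + 1 by ring, tmC_odd, tmC_odd, hm, hm']
  simp; omega

lemma tmLang_counts (w : List Bool) (hw : w ∈ tmLang) :
    w.count true = w.count false ∨ w.count true = w.count false + 1 ∨
    w.count false = w.count true + 1 ∨ w.count true = w.count false + 2 ∨
    w.count false = w.count true + 2 := by
  obtain ⟨-, i, hi⟩ := hw
  generalize w.length = n at hi
  have hi' : w = tmFac i n := hi
  subst hi'
  have h1 := tmFac_true i n
  have h2 := tmFac_false i n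
  unfold tmC at h1
  split_ifs at h1 <;> omega

lemma tm_residue (p q : ℕ) (w : List Bool) (hw : w ∈ tmLang) :
    ((wordValTM p q w : ℕ) : ZMod (p + q)) ∈
      ({0, (p : ZMod (p + q)), -(p : ZMod (p + q)), 2 * (p : ZMod (p + q)),
        -(2 * (p : ZMod (p + q)))} : Finset (ZMod (p + q))) := by
  have hs : (p : ZMod (p + q)) + q = 0 := by
    have := ZMod.natCast_self (p + q)
    push_cast at this
    exact this
  have hq : (q : ZMod (p + q)) = -p := by linear_combination hs
  have hh := tmLang_counts w hw
  simp only [Finset.mem_insert, Finset.mem_singleton, wordValTM]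
  push_cast
  rw [hq]
  rcases hh with h | h | h | h | h <;> rw [h] <;> push_cast
  · left; ring
  · right; right; left; ring
  · right; left; ring
  · right; right; right; right; ring
  · right; right; right; left; ring

lemma tm_inf (p q : ℕ) (h : 6 ≤ p + q) :
    {n : ℕ | 0 < n ∧ n ∉ {m : ℕ | ∃ w ∈ tmLang, wordValTM p q w = m}}.Infinite := by
  have : NeZero (p + q) := ⟨by omega⟩
  have hcard : ({0, (p : ZMod (p + q)), -(p : ZMod (p + q)), 2 * (p : ZMod (p + q)),
        -(2 * (p : ZMod (p + q)))} : Finset (ZMod (p + q))).card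
      < (Finset.univ : Finset (ZMod (p + q))).card := by
    rw [Finset.card_univ, ZMod.card]
    exact lt_of_le_of_lt Finset.card_le_five (by omega)
  obtain ⟨r, -, hr⟩ := Finset.exists_mem_notMem_of_card_lt_card hcard
  refine Set.infinite_of_injective_forall_mem
    (f := fun k : ℕ => r.val + (p + q) * (k + 1)) ?_ ?_
  · intro a b hab
    have hab' : (p + q) * (a + 1) = (p + q) * (b + 1) := Nat.add_left_cancel hab
    have := Nat.eq_of_mul_eq_mul_left (by omega) hab'
    omega
  · intro k
    refine ⟨?_, ?_⟩
    · have : 0 < (p + q) * (k + 1) := Nat.mul_pos (by omega) (by omega)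
      show 0 < r.val + _
      omega
    · rintro ⟨w, hw, hv⟩
      apply hr
      have := tm_residue p q w hw
      rw [hv, Nat.cast_add, Nat.cast_mul, ZMod.natCast_self, ZMod.natCast_zmod_val] at this
      simpa only [zero_mul, add_zero] using this

lemma tm_sub (p q : ℕ) (hp : 0 < p) (hq : 0 < q) (hgcd : Nat.gcd p q = 1) (h : p + q < 6) :
    {n : ℕ | 0 < n ∧ n ∉ {m : ℕ | ∃ w ∈ tmLang, wordValTM p q w = m}}.Subsingleton := by
  have key : ∀ n, n ∉ {m : ℕ | ∃ w ∈ tmLang, wordValTM p q w = m} → ∀ k,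
      (k + 1) * p + (k + 1) * q ≠ n ∧ k * p + (k + 1) * q ≠ n ∧ (k + 1) * p + k * q ≠ n ∧
      k * p + (k + 2) * q ≠ n ∧ (k + 2) * p + k * q ≠ n := by
    intro n hn k
    refine ⟨?_, ?_, ?_, ?_, ?_⟩ <;> rintro rfl <;> apply hn
    exacts [tmRep0 k p q, tmRep1 k p q, tmRep2 k p q, tmRep3 k p q, tmRep4 k p q]
  rintro x ⟨hx, hx'⟩ y ⟨hy, hy'⟩
  have a0 := key x hx' (x / (p + q))
  have a1 := key x hx' (x / (p + q) - 1)
  have a2 := key x hx' (x / (p + q) - 2)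
  have b0 := key y hy' (y / (p + q))
  have b1 := key y hy' (y / (p + q) - 1)
  have b2 := key y hy' (y / (p + q) - 2)
  clear key hx' hy'
  have hp5 : p < 5 := by omega
  have hq5 : q < 5 := by omega
  interval_cases p <;> interval_cases q <;> first | omega | (exfalso; revert hgcd; decide)

theorem tm_complement_cardinality (p q : ℕ) (hp : 0 < p) (hq : 0 < q)
    (hgcd : Nat.gcd p q = 1) :
    ({n : ℕ | 0 < n ∧ n ∉ {m : ℕ | ∃ w ∈ tmLang, wordValTM p q w = m}}.Infinite ↔
      6 ≤ p + q) ∧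
    (p + q < 6 →
      {n : ℕ | 0 < n ∧ n ∉ {m : ℕ | ∃ w ∈ tmLang, wordValTM p q w = m}}.Subsingleton) := by
  exact ⟨⟨fun hinf => by
      by_contra hlt
      exact hinf (tm_sub p q hp hq hgcd (by omega)).finite, tm_inf p q⟩,
    tm_sub p q hp hq hgcd⟩
end
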